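/- For every n ≥ 2, the number of words L ∈ 𝓛_n with exactly one P1-match and no P6-match (equivalently, paths with exactly one east step below the subdiagonal y = x − 1 and no north step above the superdiagonal y = x + 1) equals (n−1)·2^{n−2}. -/

import Mathlib

/-!
Words over the alphabet {E, N} are encoded as `List Bool`,
with `true` representing an east step `E` and `false` a north step `N`.
The word `w = w_1 ⋯ w_{2n}` corresponds to the lattice path from `(0,0)` to
`(n,n)` whose `j`-th step is east if `w_j = true` and north if `w_j = false`.
-/

/-- `w ∈ 𝓛_n`: the word `w` has exactly `n` `E`'s and `n` `N`'s. -/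
def memL (n : ℕ) (w : List Bool) : Prop :=
  w.count true = n ∧ w.count false = n

/-- The (0-indexed, increasing) list of positions at which the letter `b` occurs in `w`. -/
def occPos (w : List Bool) (b : Bool) : List ℕ :=
  (List.range w.length).filter (fun j => w.getD j (!b) == b)

/-- `ps_w({i, i+1})` (with `i` 1-indexed): the length-4 word obtained from `w` by
deleting, for each `j ∉ {i, i+1}`, the `j`-th occurrence of `E` and the `j`-th
occurrence of `N` (counted from left to right); i.e. the word formed by the
`i`-th and `(i+1)`-th occurrences of `E` and of `N`, read in their original order. -/
def pairedSubword (w : List Bool) (i : ℕ) : List Bool :=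
  let keep : List ℕ := [(occPos w true).getD (i-1) 0, (occPos w true).getD i 0,
                        (occPos w false).getD (i-1) 0, (occPos w false).getD i 0]
  ((List.range w.length).filter (fun j => keep.contains j)).map (fun j => w.getD j true)

/-- `P`-mch(w): the number of paired steps `i` with `1 ≤ i ≤ n-1` at which the
paired pattern `P` matches in `w ∈ 𝓛_n`. -/
def pmch (n : ℕ) (P w : List Bool) : ℕ :=
  ((Finset.Icc 1 (n-1)).filter (fun i => pairedSubword w i = P)).card

def P1 : List Bool := [true, true, false, false]   -- EENN
def P2 : List Bool := [true, false, true, false]   -- ENEN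
def P3 : List Bool := [false, true, true, false]   -- NEEN
def P4 : List Bool := [true, false, false, true]   -- ENNE
def P5 : List Bool := [false, true, false, true]   -- NENE
def P6 : List Bool := [false, false, true, true]   -- NNEE
/-!
Let the height of a lattice path be the number of `b`-steps minus the number of `!b`-steps made so
far. The pattern `[b, b, !b, !b]` matches at paired step `i` exactly when the `(i + 1)`-st `b`
precedes the `i`-th `!b`, that is, when the `(i + 1)`-st `b`-step starts at positive height; so
`P1`-matches count high east steps and `P6`-matches count high north steps. A word without either
is an arbitrary concatenation of the blocks `EN` and `NE`, and there are `2 ^ n` of these. A word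
with exactly one high east step and no high north step contains in addition exactly one block
`EENN`. Splitting off the first block gives the recurrence `a (n + 2) = 2 * a (n + 1) + 2 ^ n` with
`a 1 = 0`, solved by `a n = (n - 1) * 2 ^ (n - 2)`.
-/

section Lists

variable {α : Type*}

lemma disjoint_image_append {u v : List α} (huv : ¬ u <+: v) (hvu : ¬ v <+: u)
    (S T : Set (List α)) : Disjoint ((u ++ ·) '' S) ((v ++ ·) '' T) := by
  rw [Set.disjoint_left]
  rintro _ ⟨x, -, rfl⟩ ⟨y, -, hxy⟩
  exact (List.prefix_or_prefix_of_prefix (List.prefix_append u x) ⟨y, hxy⟩).elim huv hvu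

lemma encard_image_append (u : List α) (S : Set (List α)) :
    ((u ++ ·) '' S).encard = S.encard :=
  (List.append_right_injective u).encard_image S

variable [BEq α] {w : List α} {a c : α} {i j k : ℕ}

lemma countBefore_le_iff_le_idxOfNth (hk : k ≤ w.length) :
    w.countBefore c k ≤ j ↔ k ≤ w.idxOfNth c j := by
  induction w generalizing j k with
  | nil => simp_all
  | cons d w ih =>
    cases k with
    | zero => simp
    | succ k =>
      have ih' (j : ℕ) : w.countBefore c k ≤ j ↔ k ≤ w.idxOfNth c j := ih (by simpa using hk)
      have ih_zero := ih' 0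
      cases j <;> grind

lemma idxOfNth_ne_idxOfNth [LawfulBEq α] (hac : a ≠ c) (hi : i < w.count a) :
    w.idxOfNth a i ≠ w.idxOfNth c j := by
  intro heq
  have hlt : w.idxOfNth a i < w.length := List.idxOfNth_lt_length_of_lt_count hi
  have hlt' : w.idxOfNth c j < w.length := heq ▸ hlt
  apply hac
  calc a = w[w.idxOfNth a i] := List.getElem_idxOfNth_eq.symm
    _ = w[w.idxOfNth c j] := by simp only [heq]
    _ = c := List.getElem_idxOfNth_eq

lemma idxOfNth_lt_idxOfNth_iff_countBefore_le [LawfulBEq α] (hac : a ≠ c) (hi : i < w.count a) :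
    w.idxOfNth a i < w.idxOfNth c j ↔ w.countBefore c (w.idxOfNth a i) ≤ j := by
  rw [countBefore_le_iff_le_idxOfNth List.idxOfNth_le_length,
    (idxOfNth_ne_idxOfNth hac hi).le_iff_lt]

lemma getD_idxOfNth [LawfulBEq α] (hi : i < w.count a) (d : α) :
    w.getD (w.idxOfNth a i) d = a := by
  rw [List.getD_eq_getElem _ _ (List.idxOfNth_lt_length_of_lt_count hi),
    List.getElem_idxOfNth_eq]

lemma countBefore_idxOfNth_cons_self [LawfulBEq α] (hac : a ≠ c) :
    (a :: w).countBefore c ((a :: w).idxOfNth a (i + 1)) = w.countBefore c (w.idxOfNth a i) := by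
  simp [hac]

lemma countBefore_idxOfNth_cons_of_ne [LawfulBEq α] (hac : a ≠ c) :
    (c :: w).countBefore c ((c :: w).idxOfNth a i) = w.countBefore c (w.idxOfNth a i) + 1 := by
  rw [List.idxOfNth_cons_of_not_beq (by simpa using hac.symm),
    List.countBefore_cons_succ_of_beq (beq_self_eq_true c)]

lemma filter_range_mem_eq_self {l : List ℕ} {m : ℕ} (hl : l.Pairwise (· < ·))
    (hm : ∀ j ∈ l, j < m) : (List.range m).filter (· ∈ l) = l :=
  (List.pairwise_lt_range.filter _).eq_of_mem_iff hl (by simpa using hm)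

end Lists

lemma occPos_eq_idxsOf (w : List Bool) (b : Bool) : occPos w b = w.idxsOf b := by
  refine (List.pairwise_lt_range.filter _).eq_of_mem_iff List.pairwise_idxsOf ?_
  intro j
  rw [List.mem_filter, List.mem_range, List.mem_idxsOf_iff_exists_getElem_pos]
  grind

lemma occPos_getD {w : List Bool} {b : Bool} {i : ℕ} (hi : i < w.count b) :
    (occPos w b).getD i 0 = w.idxOfNth b i := by
  rw [occPos_eq_idxsOf, List.getD_eq_getElem _ _ (by simpa using hi),
    List.getElem_idxOf_eq_idxOfNth]

section pairedSubword

variable {w : List Bool} {b : Bool} {k : ℕ}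

lemma pairedSubword_succ (hb : k + 1 < w.count b) (hb' : k + 1 < w.count !b) :
    pairedSubword w (k + 1) =
      ((List.range w.length).filter (· ∈ [w.idxOfNth b k, w.idxOfNth b (k + 1),
        w.idxOfNth (!b) k, w.idxOfNth (!b) (k + 1)])).map (w.getD · true) := by
  unfold pairedSubword
  cases b <;>
  · simp only [Bool.not_true, Bool.not_false] at hb hb' ⊢
    simp only [Nat.add_sub_cancel, occPos_getD hb, occPos_getD hb',
      occPos_getD (Nat.lt_of_succ_lt hb), occPos_getD (Nat.lt_of_succ_lt hb')]
    congr! 2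
    grind

lemma pairedSubword_eq_of_lt (hb : k + 1 < w.count b) (hb' : k + 1 < w.count !b)
    (h : w.idxOfNth b (k + 1) < w.idxOfNth (!b) k) :
    pairedSubword w (k + 1) = [b, b, !b, !b] := by
  have hlt : w.idxOfNth b k < w.idxOfNth b (k + 1) :=
    List.idxOfNth_lt_idxOfNth_iff.2 ⟨by omega, by omega⟩
  have hlt' : w.idxOfNth (!b) k < w.idxOfNth (!b) (k + 1) :=
    List.idxOfNth_lt_idxOfNth_iff.2 ⟨by omega, by omega⟩
  have hlast : w.idxOfNth (!b) (k + 1) < w.length := List.idxOfNth_lt_length_of_lt_count hb'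
  rw [pairedSubword_succ hb hb', filter_range_mem_eq_self]
  · simp only [List.map_cons, List.map_nil, getD_idxOfNth hb, getD_idxOfNth hb',
      getD_idxOfNth (Nat.lt_of_succ_lt hb), getD_idxOfNth (Nat.lt_of_succ_lt hb')]
  · grind
  · simp only [List.forall_mem_cons]
    grind

lemma sublist_pairedSubword_of_lt (hb : k + 1 < w.count b) (hb' : k + 1 < w.count !b)
    (h : w.idxOfNth (!b) k < w.idxOfNth b (k + 1)) :
    [!b, b].Sublist (pairedSubword w (k + 1)) := by
  have hlast : w.idxOfNth b (k + 1) < w.length := List.idxOfNth_lt_length_of_lt_count hb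
  have hpair : (List.range w.length).filter (· ∈ [w.idxOfNth (!b) k, w.idxOfNth b (k + 1)]) =
      [w.idxOfNth (!b) k, w.idxOfNth b (k + 1)] :=
    filter_range_mem_eq_self (by simpa) (by simpa using ⟨h.trans hlast, hlast⟩)
  have hmap : [!b, b] = [w.idxOfNth (!b) k, w.idxOfNth b (k + 1)].map (w.getD · true) := by
    simp only [List.map_cons, List.map_nil, getD_idxOfNth hb,
      getD_idxOfNth (Nat.lt_of_succ_lt hb')]
  rw [pairedSubword_succ hb hb', hmap, ← hpair]
  exact (List.monotone_filter_right _ (by grind)).map _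

lemma pairedSubword_eq_iff (hb : k + 1 < w.count b) (hb' : k + 1 < w.count !b) :
    pairedSubword w (k + 1) = [b, b, !b, !b] ↔
      w.countBefore (!b) (w.idxOfNth b (k + 1)) ≤ k := by
  have hne : w.idxOfNth b (k + 1) ≠ w.idxOfNth (!b) k := idxOfNth_ne_idxOfNth (by simp) hb
  rw [← idxOfNth_lt_idxOfNth_iff_countBefore_le (by simp) hb]
  refine ⟨fun h => ?_, pairedSubword_eq_of_lt hb hb'⟩
  have hnot : ¬ [!b, b].Sublist [b, b, !b, !b] := by cases b <;> decide
  by_contra hlt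
  exact hnot (h ▸ sublist_pairedSubword_of_lt hb hb' (by omega))

end pairedSubword

/-- The number of `b`-steps of `w` that start at positive height, where the path `w` starts at
height `h`, each `b`-step raises the height by `1` and each other step lowers it by `1`. -/
def highSteps (b : Bool) : ℤ → List Bool → ℕ
  | _, [] => 0
  | h, c :: w =>
    if c = b then (if 0 < h then 1 else 0) + highSteps b (h + 1) w else highSteps b (h - 1) w

lemma highSteps_eq_card (b : Bool) (w : List Bool) (h : ℤ) :
    highSteps b h w = ((Finset.range (w.count b)).filter fun i =>
      (w.countBefore (!b) (w.idxOfNth b i) : ℤ) < i + h).card := by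
  simp only [Finset.card_filter]
  induction w generalizing h with
  | nil => simp [highSteps]
  | cons c w ih =>
    by_cases hc : c = b
    · subst hc
      rw [List.count_cons_self, Finset.sum_range_succ', highSteps, if_pos rfl, ih, add_comm]
      congr 1
      · simp only [countBefore_idxOfNth_cons_self (show c ≠ !c by simp), Nat.cast_succ]
        grind
      · simp
    · obtain rfl : c = !b := Bool.eq_not.2 hc
      rw [List.count_cons_of_ne hc, highSteps, if_neg hc, ih]
      simp only [countBefore_idxOfNth_cons_of_ne (Ne.symm hc), Nat.cast_succ]
      grind

lemma pmch_eq_highSteps {n : ℕ} {w : List Bool} {b : Bool} (hb : w.count b = n)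
    (hb' : w.count (!b) = n) : pmch n [b, b, !b, !b] w = highSteps b 0 w := by
  rw [highSteps_eq_card, pmch, hb]
  congr 1
  ext i
  cases i with
  | zero => simp
  | succ k =>
    simp only [Finset.mem_filter, Finset.mem_Icc, Finset.mem_range]
    have hmatch (hk : k + 1 < n) : pairedSubword w (k + 1) = [b, b, !b, !b] ↔
        w.countBefore (!b) (w.idxOfNth b (k + 1)) ≤ k :=
      pairedSubword_eq_iff (hb ▸ hk) (hb' ▸ hk)
    grind

/-- `w ∈ 𝓛_n` has exactly `k` east steps below the subdiagonal `y = x - 1` and no north step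
above the superdiagonal `y = x + 1`; the height in `highSteps true` is `x - y`, and in
`highSteps false` it is `y - x`. -/
def HasHighEast (n k : ℕ) (w : List Bool) : Prop :=
  memL n w ∧ highSteps true 0 w = k ∧ highSteps false 0 w = 0

section HasHighEast

variable {n k : ℕ} {w : List Bool}

lemma hasHighEast_iff_pmch :
    HasHighEast n k w ↔ memL n w ∧ pmch n P1 w = k ∧ pmch n P6 w = 0 :=
  and_congr_right fun hw => by
    rw [← pmch_eq_highSteps hw.1 hw.2, ← pmch_eq_highSteps hw.2 hw.1]
    rfl

@[simp]
lemma hasHighEast_en_cons : HasHighEast (n + 1) k (true :: false :: w) ↔ HasHighEast n k w := by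
  simp [HasHighEast, memL, highSteps]

@[simp]
lemma hasHighEast_ne_cons : HasHighEast (n + 1) k (false :: true :: w) ↔ HasHighEast n k w := by
  simp [HasHighEast, memL, highSteps]

@[simp]
lemma hasHighEast_eenn_cons : HasHighEast (n + 2) (k + 1) (true :: true :: false :: false :: w) ↔
    HasHighEast n k w := by
  simp [HasHighEast, memL, highSteps, add_comm 1]

@[simp]
lemma not_hasHighEast_nn_cons : ¬ HasHighEast n k (false :: false :: w) := by
  simp [HasHighEast, highSteps]

@[simp]
lemma not_hasHighEast_zero_ee_cons : ¬ HasHighEast n 0 (true :: true :: w) := by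
  simp [HasHighEast, highSteps]

@[simp]
lemma not_hasHighEast_one_eee_cons : ¬ HasHighEast n 1 (true :: true :: true :: w) := by
  simp [HasHighEast, highSteps]

@[simp]
lemma not_hasHighEast_one_eene_cons : ¬ HasHighEast n 1 (true :: true :: false :: true :: w) := by
  simp [HasHighEast, highSteps]

lemma hasHighEast_zero_iff : HasHighEast 0 k w ↔ w = [] ∧ k = 0 := by
  match w with
  | [] => simp [HasHighEast, memL, highSteps, eq_comm]
  | true :: w | false :: w => simp [HasHighEast, memL]

lemma setOf_hasHighEast_succ_zero : {w | HasHighEast (n + 1) 0 w} =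
    ([true, false] ++ ·) '' {w | HasHighEast n 0 w} ∪
      ([false, true] ++ ·) '' {w | HasHighEast n 0 w} := by
  ext w
  match w with
  | [] | [true] | [false] => simp [HasHighEast, memL]
  | true :: true :: w | false :: false :: w => simp
  | true :: false :: w | false :: true :: w => simp

lemma setOf_hasHighEast_one_one : {w | HasHighEast 1 1 w} = ∅ := by
  ext w
  match w with
  | [] | [true] | [false] => simp [HasHighEast, memL]
  | true :: true :: w => simp [HasHighEast, memL]
  | false :: false :: w => simp
  | true :: false :: w | false :: true :: w => simp [hasHighEast_zero_iff]

lemma setOf_hasHighEast_add_two_one : {w | HasHighEast (n + 2) 1 w} =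
    ([true, false] ++ ·) '' {w | HasHighEast (n + 1) 1 w} ∪
      ([false, true] ++ ·) '' {w | HasHighEast (n + 1) 1 w} ∪
      ([true, true, false, false] ++ ·) '' {w | HasHighEast n 0 w} := by
  ext w
  match w with
  | [] | [true] | [false] => simp [HasHighEast, memL]
  | [true, true] | [true, true, false] => simp [HasHighEast, memL]
  | true :: true :: true :: w | false :: false :: w => simp
  | true :: true :: false :: true :: w => simp
  | true :: true :: false :: false :: w => simp
  | true :: false :: w | false :: true :: w => simp

lemma encard_hasHighEast_zero (n : ℕ) : {w | HasHighEast n 0 w}.encard = 2 ^ n := by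
  induction n with
  | zero => simp [hasHighEast_zero_iff]
  | succ n ih =>
    rw [setOf_hasHighEast_succ_zero,
      Set.encard_union_eq (disjoint_image_append (by decide) (by decide) _ _)]
    simp only [encard_image_append, ih]
    ring

lemma encard_hasHighEast_add_two_one (n : ℕ) : {w | HasHighEast (n + 2) 1 w}.encard =
    2 * {w | HasHighEast (n + 1) 1 w}.encard + 2 ^ n := by
  rw [setOf_hasHighEast_add_two_one, Set.encard_union_eq, Set.encard_union_eq]
  · simp only [encard_image_append, encard_hasHighEast_zero]
    ring
  · exact disjoint_image_append (by decide) (by decide) _ _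
  · exact Set.disjoint_union_left.2 ⟨disjoint_image_append (by decide) (by decide) _ _,
      disjoint_image_append (by decide) (by decide) _ _⟩

lemma encard_hasHighEast_one (n : ℕ) :
    {w | HasHighEast (n + 2) 1 w}.encard = ((n + 1) * 2 ^ n : ℕ) := by
  induction n with
  | zero => simp [encard_hasHighEast_add_two_one, setOf_hasHighEast_one_one]
  | succ n ih =>
    rw [encard_hasHighEast_add_two_one, ih]
    push_cast
    ring

end HasHighEast

theorem count_one_P1_no_P6 (n : ℕ) (hn : 2 ≤ n) :
    {w : List Bool | memL n w ∧ pmch n P1 w = 1 ∧ pmch n P6 w = 0}.ncard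
      = (n-1) * 2^(n-2) := by
  obtain ⟨m, rfl⟩ := Nat.exists_eq_add_of_le' hn
  simp_rw [← hasHighEast_iff_pmch]
  rw [Set.ncard_def, encard_hasHighEast_one, ENat.toNat_natCast, Nat.add_sub_cancel]
  rfl
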